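/- There exists an absolute constant C > 0 such that for every dimension d ∈ ℤ₊, every ε ∈ (0,1), every δ ∈ (0, √(log(1 + ε/(1−ε)))), every τ ∈ (0,1), and every positive integer n with n ≥ exp(C·((1/δ)·log(1 + ε/(1−ε)))²)·(d + log(1/τ))/(ε²·(1−ε)), there exists a measurable function A : (ℝ^d ∪ {⊥})ⁿ → ℝ^d such that for every μ ∈ ℝ^d and every ε-corrupted version Q of N(μ, I_d), Pr_{(x₁,…,xₙ)∼Q^⊗n}[‖A(x₁,…,xₙ) − μ‖₂ ≤ δ] ≥ 1 − τ. -/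

import Mathlib

open MeasureTheory

/-- Measurable space structure on `Option α`: a set is measurable iff its preimage
under `some` is measurable. -/
instance optionMeasurableSpace {α : Type*} [m : MeasurableSpace α] :
    MeasurableSpace (Option α) := m.map some

/-- The probability density function of the Gaussian `N(μ, I_d)` on `ℝ^d`. -/
noncomputable def mvGaussPDF (d : ℕ) (μ x : EuclideanSpace ℝ (Fin d)) : ℝ :=
  (2 * Real.pi) ^ (-(d : ℝ) / 2) * Real.exp (-‖x - μ‖ ^ 2 / 2)

/-- `Q` is an `ε`-corrupted version (realizable `ε`-contamination model) of the
distribution on `ℝ^d` with density `p`. -/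
def IsCorruptedVersion {d : ℕ} (ε : ℝ) (p : EuclideanSpace ℝ (Fin d) → ℝ)
    (Q : Measure (Option (EuclideanSpace ℝ (Fin d)))) : Prop :=
  IsProbabilityMeasure Q ∧
  ∃ f : EuclideanSpace ℝ (Fin d) → ℝ, Measurable f ∧
    (∀ x, (1 - ε) * p x ≤ f x ∧ f x ≤ p x) ∧
    (∀ A : Set (EuclideanSpace ℝ (Fin d)), MeasurableSet A →
      Q (Option.some '' A) = ENNReal.ofReal (∫ x in A, f x)) ∧
    Q {none} = ENNReal.ofReal (1 - ∫ x, f x)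


section Conc
set_option linter.unusedSectionVars false
variable {Ω : Type*} [MeasurableSpace Ω]

/-- number of samples in `H` -/
noncomputable def cnt {n : ℕ} (H : Set Ω) (v : Fin n → Ω) : ℝ :=
  ∑ i, H.indicator (fun _ => (1 : ℝ)) (v i)

lemma cnt_mono {n : ℕ} {H K : Set Ω} (h : H ⊆ K) (v : Fin n → Ω) : cnt H v ≤ cnt K v := by
  unfold cnt
  apply Finset.sum_le_sum
  intro i _
  exact Set.indicator_le_indicator_of_subset h (fun _ => zero_le_one) _

lemma cnt_meas {n : ℕ} {H : Set Ω} (h : MeasurableSet H) :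
    Measurable (fun v : Fin n → Ω => cnt H v) := by
  unfold cnt
  apply Finset.measurable_sum
  intro i _
  exact (measurable_const.indicator h).comp (measurable_pi_apply i)

lemma exp_ind (H : Set Ω) (l : ℝ) (x : Ω) :
    Real.exp (l * H.indicator (fun _ => (1 : ℝ)) x) =
      1 + H.indicator (fun _ => Real.exp l - 1) x := by
  by_cases hx : x ∈ H <;> simp [hx]

lemma cnt_mgf {n : ℕ} (Q : Measure Ω) [IsProbabilityMeasure Q] {H : Set Ω}
    (h : MeasurableSet H) (l : ℝ) :
    Integrable (fun v : Fin n → Ω => Real.exp (l * cnt H v)) (Measure.pi fun _ => Q) ∧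
    ∫ v : Fin n → Ω, Real.exp (l * cnt H v) ∂(Measure.pi fun _ => Q) ≤
      Real.exp (n * (Q.real H * (Real.exp l - 1))) := by
  have e : (fun v : Fin n → Ω => Real.exp (l * cnt H v)) =
      fun v => ∏ i, Real.exp (l * H.indicator (fun _ => (1 : ℝ)) (v i)) := by
    funext v
    rw [cnt, Finset.mul_sum, Real.exp_sum]
  have i1 : Integrable (fun x => Real.exp (l * H.indicator (fun _ => (1 : ℝ)) x)) Q := by
    simp_rw [exp_ind]
    exact (integrable_const _).add ((integrable_const _).indicator h)
  rw [e]
  constructor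
  · exact Integrable.fintype_prod (fun i => i1)
  · rw [integral_fintype_prod_eq_pow (fun x => Real.exp (l * H.indicator (fun _ => (1 : ℝ)) x))]
    have : ∫ x, Real.exp (l * H.indicator (fun _ => (1 : ℝ)) x) ∂Q
        = 1 + Q.real H * (Real.exp l - 1) := by
      simp_rw [exp_ind]
      rw [integral_add (integrable_const _) ((integrable_const _).indicator h),
        integral_indicator_const _ h]
      simp
    rw [Fintype.card_fin, Real.exp_nat_mul]
    apply pow_le_pow_left₀
    · exact integral_nonneg (fun x => (Real.exp_pos _).le)
    · rw [this, add_comm]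
      exact Real.add_one_le_exp _

lemma cnt_lower {n : ℕ} (Q : Measure Ω) [IsProbabilityMeasure Q] {H : Set Ω}
    (h : MeasurableSet H) {a κ : ℝ} (ha : 0 < a) (hk0 : 0 ≤ κ) (hk : κ ≤ a) (hQ : a ≤ Q.real H) :
    (Measure.pi fun _ : Fin n => Q).real {v | cnt H v ≤ n * κ} ≤
      Real.exp (-(n * ((a - κ) ^ 2 / (4 * a)))) := by
  set l : ℝ := (a - κ) / (2 * a) with hl
  have hl0 : 0 ≤ l := by rw [hl]; exact div_nonneg (by linarith) (by linarith)
  have hl1 : l ≤ 1 := by rw [hl, div_le_one (by linarith)]; linarith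
  obtain ⟨h1, h2⟩ := cnt_mgf (n := n) Q h (-l)
  refine (ProbabilityTheory.measure_le_le_exp_mul_mgf (n * κ) (neg_nonpos.2 hl0) h1).trans ?_
  refine (mul_le_mul_of_nonneg_left h2 (Real.exp_pos _).le).trans ?_
  rw [← Real.exp_add]
  apply Real.exp_le_exp.2
  have h3 : Real.exp (-l) - 1 ≤ -l + l ^ 2 := by
    have := abs_le.1 (Real.abs_exp_sub_one_sub_id_le (x := -l) (by rw [abs_neg, abs_of_nonneg hl0]; exact hl1))
    nlinarith [this.2]
  have h5 : -l + l ^ 2 ≤ 0 := by nlinarith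
  have h4 : Q.real H * (Real.exp (-l) - 1) ≤ a * (-l + l ^ 2) := by
    calc _ ≤ Q.real H * (-l + l ^ 2) := mul_le_mul_of_nonneg_left h3 (by linarith)
      _ ≤ _ := mul_le_mul_of_nonpos_right hQ h5
  have h6 : l * κ + a * (-l + l ^ 2) = -((a - κ) ^ 2 / (4 * a)) := by
    rw [hl]; field_simp; ring
  have hn : (0 : ℝ) ≤ n := Nat.cast_nonneg n
  nlinarith [mul_le_mul_of_nonneg_left h4 hn]

lemma cnt_upper {n : ℕ} (Q : Measure Ω) [IsProbabilityMeasure Q] {H : Set Ω}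
    (h : MeasurableSet H) {a b κ : ℝ} (hb : 0 ≤ b) (hbk : b ≤ κ) (hk : κ ≤ a)
    (ha : 0 < a) (hQ : Q.real H ≤ b) :
    (Measure.pi fun _ : Fin n => Q).real {v | n * κ ≤ cnt H v} ≤
      Real.exp (-(n * ((κ - b) ^ 2 / (4 * a)))) := by
  set l : ℝ := (κ - b) / (2 * a) with hl
  have hl0 : 0 ≤ l := by rw [hl]; exact div_nonneg (by linarith) (by linarith)
  have hl1 : l ≤ 1 := by rw [hl, div_le_one (by linarith)]; linarith
  obtain ⟨h1, h2⟩ := cnt_mgf (n := n) Q h l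
  refine (ProbabilityTheory.measure_ge_le_exp_mul_mgf (n * κ) hl0 h1).trans ?_
  refine (mul_le_mul_of_nonneg_left h2 (Real.exp_pos _).le).trans ?_
  rw [← Real.exp_add]
  apply Real.exp_le_exp.2
  have h3 : Real.exp l - 1 ≤ l + l ^ 2 := by
    have := abs_le.1 (Real.abs_exp_sub_one_sub_id_le (x := l) (by rw [abs_of_nonneg hl0]; exact hl1))
    nlinarith [this.2]
  have h4 : Q.real H * (Real.exp l - 1) ≤ b * l + a * l ^ 2 := by
    calc _ ≤ Q.real H * (l + l ^ 2) := mul_le_mul_of_nonneg_left h3 measureReal_nonneg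
      _ ≤ b * (l + l ^ 2) := mul_le_mul_of_nonneg_right hQ (by positivity)
      _ ≤ _ := by nlinarith [sq_nonneg l]
  have h6 : -l * κ + (b * l + a * l ^ 2) = -((κ - b) ^ 2 / (4 * a)) := by
    rw [hl]; field_simp; ring
  have hn : (0 : ℝ) ≤ n := Nat.cast_nonneg n
  nlinarith [mul_le_mul_of_nonneg_left h4 hn]

end Conc

section Net

lemma exists_net (d : ℕ) : ∃ N : Finset (EuclideanSpace ℝ (Fin d)), N.card ≤ 5 ^ d ∧
    (∀ u ∈ N, ‖u‖ = 1) ∧ ∀ x : EuclideanSpace ℝ (Fin d), ∀ c : ℝ, 0 ≤ c →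
      (∀ u ∈ N, |inner ℝ x u| ≤ c) → ‖x‖ ≤ 2 * c := by
  classical
  let P : Finset (EuclideanSpace ℝ (Fin d)) → Prop := fun s =>
    (∀ c ∈ s, ‖c‖ = 2) ∧ ∀ c ∈ s, ∀ e ∈ s, c ≠ e → 1 ≤ ‖c - e‖
  have hP : ∀ s, P s → s.card ≤ 5 ^ d := by
    intro s hs
    have := Besicovitch.card_le_of_separated s (fun c hc => (hs.1 c hc).le) hs.2
    simpa using this
  let T : Set ℕ := {k | ∃ s, P s ∧ s.card = k}
  have hT : sSup T ∈ T := by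
    apply Nat.sSup_mem
    · exact ⟨0, ∅, by simp [P], rfl⟩
    · exact ⟨5 ^ d, by rintro k ⟨s, hs, rfl⟩; exact hP s hs⟩
  obtain ⟨s, hs, hsc⟩ := hT
  have hmax : ∀ s', P s' → s'.card ≤ s.card := by
    intro s' hs'
    rw [hsc]
    exact le_csSup ⟨5 ^ d, by rintro k ⟨s, hs, rfl⟩; exact hP s hs⟩ ⟨s', hs', rfl⟩
  refine ⟨s.image (fun w => (1 / 2 : ℝ) • w), Finset.card_image_le.trans (hP s hs), ?_, ?_⟩
  · intro u hu
    obtain ⟨w, hw, rfl⟩ := Finset.mem_image.1 hu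
    rw [norm_smul, hs.1 w hw]; norm_num
  · intro x c hc h
    by_cases hx : x = 0
    · simp [hx, hc]
    have hxn : 0 < ‖x‖ := norm_pos_iff.2 hx
    set w0 : EuclideanSpace ℝ (Fin d) := (2 / ‖x‖) • x with hw0
    have hw0n : ‖w0‖ = 2 := by
      rw [hw0, norm_smul, Real.norm_of_nonneg (by positivity)]; field_simp
    have : ∃ w ∈ s, ‖w0 - w‖ < 1 := by
      by_contra! hcon
      have hnot : w0 ∉ s := by
        intro hmem
        have := hcon w0 hmem
        simp at this
        linarith
      have hP' : P (insert w0 s) := by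
        constructor
        · intro c hc
          rcases Finset.mem_insert.1 hc with rfl | hc
          · exact hw0n
          · exact hs.1 c hc
        · intro c hc e he hce
          rcases Finset.mem_insert.1 hc with rfl | hc
          · rcases Finset.mem_insert.1 he with rfl | he
            · exact absurd rfl hce
            · exact hcon e he
          · rcases Finset.mem_insert.1 he with rfl | he
            · rw [norm_sub_rev]; exact hcon c hc
            · exact hs.2 c hc e he hce
      have := hmax _ hP'
      rw [Finset.card_insert_of_notMem hnot] at this
      omega
    obtain ⟨w, hw, hww⟩ := this
    have h1 := h _ (Finset.mem_image_of_mem _ hw)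
    rw [inner_smul_right] at h1
    have h2 : inner ℝ x w = inner ℝ x w0 - inner ℝ x (w0 - w) := by
      rw [inner_sub_right]; ring
    have h3 : inner ℝ x w0 = 2 * ‖x‖ := by
      rw [hw0, inner_smul_right, real_inner_self_eq_norm_sq]; field_simp
    have h4 : inner ℝ x (w0 - w) ≤ ‖x‖ :=
      (real_inner_le_norm _ _).trans (by nlinarith)
    have h5 := (abs_le.1 h1).2
    linarith

end Net

section Gauss
variable {d : ℕ}

lemma pdf_integral (μ : EuclideanSpace ℝ (Fin d)) : ∫ x, mvGaussPDF d μ x = 1 := by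
  unfold mvGaussPDF
  rw [integral_const_mul,
    integral_sub_right_eq_self (fun x : EuclideanSpace ℝ (Fin d) => Real.exp (-‖x‖ ^ 2 / 2)) μ]
  have h := GaussianFourier.integral_rexp_neg_mul_sq_norm (V := EuclideanSpace ℝ (Fin d))
    (b := 1 / 2) (by norm_num)
  have e : (fun x : EuclideanSpace ℝ (Fin d) => Real.exp (-‖x‖ ^ 2 / 2)) =
      fun x => Real.exp (-(1 / 2) * ‖x‖ ^ 2) := by
    funext x; congr 1; ring
  rw [e, h, finrank_euclideanSpace_fin]
  have : Real.pi / (1 / 2) = 2 * Real.pi := by ring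
  rw [this, ← Real.rpow_add (by positivity)]
  have : -(d : ℝ) / 2 + d / 2 = 0 := by ring
  rw [this, Real.rpow_zero]

lemma pdf_integrable (μ : EuclideanSpace ℝ (Fin d)) : Integrable (mvGaussPDF d μ) :=
  Integrable.of_integral_ne_zero (by rw [pdf_integral]; norm_num)

lemma pdf_nonneg (μ x : EuclideanSpace ℝ (Fin d)) : 0 ≤ mvGaussPDF d μ x := by
  unfold mvGaussPDF; positivity

/-- open half-space -/
def hs (u : EuclideanSpace ℝ (Fin d)) (t : ℝ) : Set (EuclideanSpace ℝ (Fin d)) :=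
  {x | t < inner ℝ x u}

lemma hs_meas (u : EuclideanSpace ℝ (Fin d)) (t : ℝ) : MeasurableSet (hs u t) :=
  measurableSet_lt measurable_const (by fun_prop)

lemma hs_anti (u : EuclideanSpace ℝ (Fin d)) {s t : ℝ} (h : s ≤ t) : hs u t ⊆ hs u s :=
  fun _ hx => lt_of_le_of_lt h hx

/-- Gaussian tail -/
noncomputable def psi (u : EuclideanSpace ℝ (Fin d)) (t : ℝ) : ℝ :=
  ∫ x in hs u t, mvGaussPDF d 0 x

lemma hs_translate (u w : EuclideanSpace ℝ (Fin d)) (t : ℝ) (p : EuclideanSpace ℝ (Fin d) → ℝ) :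
    ∫ x in hs u (t + inner ℝ w u), p x = ∫ x in hs u t, p (x + w) := by
  rw [← integral_indicator (hs_meas _ _), ← integral_indicator (hs_meas _ _),
    ← integral_add_right_eq_self _ w]
  congr 1
  funext x
  have hiff : x + w ∈ hs u (t + inner ℝ w u) ↔ x ∈ hs u t := by simp [hs, inner_add_left]
  by_cases hx : x ∈ hs u t
  · rw [Set.indicator_of_mem (hiff.2 hx), Set.indicator_of_mem hx]
  · rw [Set.indicator_of_notMem (fun h => hx (hiff.1 h)), Set.indicator_of_notMem hx]

lemma psi_mean (u μ : EuclideanSpace ℝ (Fin d)) (t : ℝ) :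
    ∫ x in hs u (t + inner ℝ μ u), mvGaussPDF d μ x = psi u t := by
  rw [hs_translate, psi]
  simp [mvGaussPDF]

lemma pdf_shift (u x : EuclideanSpace ℝ (Fin d)) (hu : ‖u‖ = 1) (s : ℝ) :
    mvGaussPDF d 0 (x + s • u) =
      mvGaussPDF d 0 x * Real.exp (-s * inner ℝ x u - s ^ 2 / 2) := by
  unfold mvGaussPDF
  rw [mul_assoc, ← Real.exp_add]
  congr 2
  rw [sub_zero, sub_zero, norm_add_sq_real, norm_smul, hu, inner_smul_right, mul_one, Real.norm_eq_abs, sq_abs]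
  ring

lemma psi_shift (u : EuclideanSpace ℝ (Fin d)) (hu : ‖u‖ = 1) (t s : ℝ) :
    psi u (t + s) = ∫ x in hs u t, mvGaussPDF d 0 x * Real.exp (-s * inner ℝ x u - s ^ 2 / 2) := by
  have : s = inner ℝ (s • u) u := by
    rw [inner_smul_left, real_inner_self_eq_norm_sq, hu]; simp
  rw [psi]
  conv_lhs => rw [this, hs_translate]
  simp_rw [pdf_shift u _ hu]

lemma shift_integrable (u : EuclideanSpace ℝ (Fin d)) (hu : ‖u‖ = 1) (s : ℝ) :
    Integrable (fun x => mvGaussPDF d 0 x * Real.exp (-s * inner ℝ x u - s ^ 2 / 2)) := by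
  simp_rw [← pdf_shift u _ hu]
  exact (pdf_integrable 0).comp_add_right _

lemma psi_ratio (u : EuclideanSpace ℝ (Fin d)) (hu : ‖u‖ = 1) (t s : ℝ) (hs0 : 0 ≤ s) :
    psi u (t + s) ≤ Real.exp (-(t * s)) * psi u t := by
  rw [psi_shift u hu, psi, ← integral_const_mul]
  apply setIntegral_mono_on (shift_integrable u hu s).integrableOn
    ((pdf_integrable 0).const_mul _).integrableOn (hs_meas _ _)
  intro x hx
  rw [mul_comm]
  apply mul_le_mul_of_nonneg_right _ (pdf_nonneg _ _)
  apply Real.exp_le_exp.2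
  have : t < inner ℝ x u := hx
  nlinarith [mul_le_mul_of_nonneg_left this.le hs0]

lemma psi_le_one (u : EuclideanSpace ℝ (Fin d)) (t : ℝ) : psi u t ≤ 1 := by
  rw [← pdf_integral (d := d) 0, psi]
  exact setIntegral_le_integral (pdf_integrable _) (Filter.Eventually.of_forall (pdf_nonneg _))

lemma psi_nonneg (u : EuclideanSpace ℝ (Fin d)) (t : ℝ) : 0 ≤ psi u t :=
  integral_nonneg (pdf_nonneg _)

lemma psi_two (u : EuclideanSpace ℝ (Fin d)) (hu : ‖u‖ = 1) : psi u 2 ≤ Real.exp (-1) := by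
  have h := psi_ratio u hu 1 1 zero_le_one
  have h2 := psi_le_one u 1
  have e : (1 : ℝ) + 1 = 2 := by norm_num
  rw [e, mul_one] at h
  nlinarith [Real.exp_pos (-1)]

lemma psi_lower (u : EuclideanSpace ℝ (Fin d)) (hu : ‖u‖ = 1) (t : ℝ) (ht : 0 ≤ t) :
    Real.exp (-(t + 5) ^ 2 / 2) ≤ psi u t := by
  let B : Set (EuclideanSpace ℝ (Fin d)) := {x | |inner ℝ x u| ≤ 2}
  have hB : MeasurableSet B := measurableSet_le (by fun_prop) measurable_const
  have hBm : Real.exp (-2) ≤ ∫ x in B, mvGaussPDF d 0 x := by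
    have h1 := integral_add_compl hB (pdf_integrable (d := d) 0)
    rw [pdf_integral] at h1
    have h2 : Bᶜ ⊆ hs u 2 ∪ hs (-u) 2 := by
      intro x hx
      simp only [B, Set.mem_compl_iff, Set.mem_ofPred_eq, not_le, lt_abs] at hx
      simpa [hs, inner_neg_right] using hx
    have h3 : ∫ x in Bᶜ, mvGaussPDF d 0 x ≤ psi u 2 + psi (-u) 2 := by
      have hI := pdf_integrable (d := d) 0
      rw [psi, psi, ← integral_indicator hB.compl, ← integral_indicator (hs_meas _ _),
        ← integral_indicator (hs_meas _ _), ← integral_add (hI.indicator (hs_meas _ _))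
          (hI.indicator (hs_meas _ _))]
      apply integral_mono (hI.indicator hB.compl)
        ((hI.indicator (hs_meas _ _)).add (hI.indicator (hs_meas _ _)))
      intro x
      have hn := pdf_nonneg (d := d) 0 x
      by_cases hx : x ∈ Bᶜ
      · simp only [Set.indicator_of_mem hx]
        rcases h2 hx with h | h
        · have := Set.indicator_nonneg (s := hs (-u) 2) (fun x _ => pdf_nonneg (d := d) 0 x) x
          have hq := Set.indicator_of_mem h (mvGaussPDF d 0)
          rw [Pi.add_apply]
          linarith
        · have := Set.indicator_nonneg (s := hs u 2) (fun x _ => pdf_nonneg (d := d) 0 x) x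
          have hq := Set.indicator_of_mem h (mvGaussPDF d 0)
          rw [Pi.add_apply]
          linarith
      · simp only [Set.indicator_of_notMem hx]
        exact add_nonneg (Set.indicator_nonneg (fun x _ => pdf_nonneg (d := d) 0 x) x)
          (Set.indicator_nonneg (fun x _ => pdf_nonneg (d := d) 0 x) x)
    have h4 := psi_two u hu
    have h5 := psi_two (-u) (by rw [norm_neg, hu])
    have h6 : Real.exp (-2) = Real.exp (-1) ^ 2 := by
      rw [← Real.exp_nat_mul]; norm_num
    have h7 := Real.exp_neg_one_lt_d9
    have h8 := Real.exp_pos (-1)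
    rw [h6]
    nlinarith
  have e : t = -3 + (t + 3) := by ring
  have e2 : psi u t = psi u (-3 + (t + 3)) := by rw [← e]
  rw [e2, psi_shift u hu]
  have hBs : B ⊆ hs u (-3) := by
    intro x hx
    have := (abs_le.1 (show |inner ℝ x u| ≤ 2 from hx)).1
    show -3 < inner ℝ x u
    linarith
  calc Real.exp (-(t + 5) ^ 2 / 2) = Real.exp (-2 * (t + 3) - (t + 3) ^ 2 / 2) * Real.exp (-2) := by
        rw [← Real.exp_add]; congr 1; ring
    _ ≤ Real.exp (-2 * (t + 3) - (t + 3) ^ 2 / 2) * ∫ x in B, mvGaussPDF d 0 x :=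
        mul_le_mul_of_nonneg_left hBm (Real.exp_pos _).le
    _ ≤ ∫ x in B, mvGaussPDF d 0 x * Real.exp (-(t + 3) * inner ℝ x u - (t + 3) ^ 2 / 2) := by
        rw [← integral_const_mul]
        apply setIntegral_mono_on ((pdf_integrable 0).const_mul _).integrableOn
          (shift_integrable u hu _).integrableOn hB
        intro x hx
        rw [mul_comm]
        apply mul_le_mul_of_nonneg_left _ (pdf_nonneg _ _)
        apply Real.exp_le_exp.2
        have := (abs_le.1 (show |inner ℝ x u| ≤ 2 from hx)).2
        nlinarith
    _ ≤ _ := by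
        apply setIntegral_mono_set (shift_integrable u hu _).integrableOn
        · exact Filter.Eventually.of_forall
            (fun x => mul_nonneg (pdf_nonneg _ _) (Real.exp_pos _).le)
        · exact Filter.Eventually.of_forall hBs

lemma corrupted_bounds {ε : ℝ} {μ : EuclideanSpace ℝ (Fin d)}
    {Q : Measure (Option (EuclideanSpace ℝ (Fin d)))} (hε : ε ∈ Set.Ioo (0 : ℝ) 1)
    (hQ : IsCorruptedVersion ε (mvGaussPDF d μ) Q) (u : EuclideanSpace ℝ (Fin d)) (t : ℝ) :
    (1 - ε) * psi u t ≤ Q.real (some '' hs u (t + inner ℝ μ u)) ∧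
      Q.real (some '' hs u (t + inner ℝ μ u)) ≤ psi u t := by
  obtain ⟨_, f, hf, hb, hA, _⟩ := hQ
  have hf0 : ∀ x, 0 ≤ f x := fun x =>
    (mul_nonneg (by linarith [hε.2]) (pdf_nonneg _ _)).trans (hb x).1
  have hI := pdf_integrable (d := d) μ
  have hfI : Integrable f := by
    apply hI.mono' hf.aestronglyMeasurable
    exact Filter.Eventually.of_forall (fun x => by
      rw [Real.norm_of_nonneg (hf0 x)]; exact (hb x).2)
  rw [Measure.real, hA _ (hs_meas _ _), ENNReal.toReal_ofReal (integral_nonneg hf0),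
    ← psi_mean u μ, ← integral_const_mul]
  exact ⟨setIntegral_mono (hI.const_mul _).integrableOn hfI.integrableOn (fun x => (hb x).1),
    setIntegral_mono hfI.integrableOn hI.integrableOn (fun x => (hb x).2)⟩

lemma some_hs_meas (u : EuclideanSpace ℝ (Fin d)) (t : ℝ) :
    MeasurableSet ((some '' hs u t : Set (Option (EuclideanSpace ℝ (Fin d))))) := by
  change MeasurableSet (some ⁻¹' (some '' hs u t))
  rw [Set.preimage_image_eq _ (Option.some_injective _)]
  exact hs_meas u t

end Gauss

section Final

lemma exp_ten : (3072 : ℝ) ≤ Real.exp 10 := by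
  have h : Real.exp 10 = Real.exp 1 ^ 10 := by rw [← Real.exp_nat_mul]; norm_num
  rw [h]
  calc (3072 : ℝ) ≤ 2.7 ^ 10 := by norm_num
    _ ≤ _ := pow_le_pow_left₀ (by norm_num) (by linarith [Real.exp_one_gt_d9]) _

lemma exp_four : (48 : ℝ) ≤ Real.exp 4 := by
  have h : Real.exp 4 = Real.exp 1 ^ 4 := by rw [← Real.exp_nat_mul]; norm_num
  rw [h]
  calc (48 : ℝ) ≤ 2.7 ^ 4 := by norm_num
    _ ≤ _ := pow_le_pow_left₀ (by norm_num) (by linarith [Real.exp_one_gt_d9]) _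

lemma exp_three : (10 : ℝ) ≤ Real.exp 3 := by
  have h : Real.exp 3 = Real.exp 1 ^ 3 := by rw [← Real.exp_nat_mul]; norm_num
  rw [h]
  calc (10 : ℝ) ≤ 2.7 ^ 3 := by norm_num
    _ ≤ _ := pow_le_pow_left₀ (by norm_num) (by linarith [Real.exp_one_gt_d9]) _

lemma numeric {ε L δ : ℝ} (hL : 0 < L) (hε : ε = 1 - Real.exp (-L)) (hδ : 0 < δ)
    (hδL : δ ^ 2 < L) :
    48 * ε ^ 2 ≤ Real.exp ((64 + 40 * Real.exp 46) * (1 / δ * L) ^ 2) *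
      Real.exp (-36 - 64 * (1 / δ * L) ^ 2) * (1 - Real.exp (-(L + δ / 4))) ^ 2 := by
  set r := 1 / δ * L with hr
  have hLr : L = r * δ := by rw [hr]; field_simp
  have hr0 : 0 < r := by positivity
  set y := 1 - Real.exp (-(L + δ / 4)) with hy
  have hε0 : 0 ≤ ε := by
    rw [hε]; have : Real.exp (-L) ≤ 1 := Real.exp_le_one_iff.2 (by linarith)
    linarith
  have hyε : ε ≤ y := by
    rw [hε, hy]
    have : Real.exp (-(L + δ / 4)) ≤ Real.exp (-L) := Real.exp_le_exp.2 (by linarith)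
    linarith
  rw [← Real.exp_add]
  have e : (64 + 40 * Real.exp 46) * r ^ 2 + (-36 - 64 * r ^ 2) = 40 * (Real.exp 46 * r ^ 2) - 36 := by
    ring
  rw [e]
  have e46 : Real.exp 46 = Real.exp 23 ^ 2 := by rw [← Real.exp_nat_mul]; norm_num
  rcases le_or_gt 1 (Real.exp 23 * r) with h | h
  · have h1 : (1 : ℝ) ≤ Real.exp 46 * r ^ 2 := by
      rw [e46, ← mul_pow]; exact one_le_pow₀ h
    have h2 : (48 : ℝ) ≤ Real.exp (40 * (Real.exp 46 * r ^ 2) - 36) :=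
      exp_four.trans (Real.exp_le_exp.2 (by linarith))
    have h3 : ε ^ 2 ≤ y ^ 2 := pow_le_pow_left₀ hε0 hyε 2
    exact mul_le_mul h2 h3 (sq_nonneg _) (Real.exp_pos _).le
  · have hr1 : r < 1 := by
      have : (1 : ℝ) ≤ Real.exp 23 := Real.one_le_exp (by norm_num)
      nlinarith
    have hδr : δ < r := by
      rw [hLr] at hδL
      nlinarith
    have hεL : ε ≤ r * δ := by
      rw [hε, ← hLr]; linarith [Real.add_one_le_exp (-L)]
    have hy8 : δ / 8 ≤ y := by
      have h1 : Real.exp (-(L + δ / 4)) ≤ Real.exp (-(δ / 4)) := Real.exp_le_exp.2 (by linarith)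
      have h2 := (abs_le.1 (Real.abs_exp_sub_one_sub_id_le (x := -(δ / 4))
        (by rw [abs_neg, abs_of_pos (by linarith)]; linarith))).2
      rw [hy]
      nlinarith
    have h1 : Real.exp (-36) ≤ Real.exp (40 * (Real.exp 46 * r ^ 2) - 36) := by
      apply Real.exp_le_exp.2
      have : 0 ≤ Real.exp 46 * r ^ 2 := by positivity
      linarith
    have h2 : r ^ 2 * Real.exp 46 ≤ 1 := by
      rw [e46, ← mul_pow]
      exact pow_le_one₀ (by positivity) (by linarith)
    have h3 : 3072 * r ^ 2 ≤ Real.exp (-36) := by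
      have h4 : Real.exp 46 = Real.exp 10 * Real.exp 36 := by rw [← Real.exp_add]; norm_num
      rw [Real.exp_neg, ← one_div, le_div_iff₀ (Real.exp_pos _)]
      calc 3072 * r ^ 2 * Real.exp 36 ≤ Real.exp 10 * r ^ 2 * Real.exp 36 := by
            gcongr; exact exp_ten
        _ = r ^ 2 * Real.exp 46 := by rw [h4]; ring
        _ ≤ 1 := h2
    calc 48 * ε ^ 2 ≤ 48 * (r * δ) ^ 2 := by gcongr
      _ = (3072 * r ^ 2) * (δ / 8) ^ 2 := by ring
      _ ≤ Real.exp (40 * (Real.exp 46 * r ^ 2) - 36) * y ^ 2 :=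
        mul_le_mul (h3.trans h1) (pow_le_pow_left₀ (by linarith) hy8 2) (sq_nonneg _)
          (Real.exp_pos _).le

lemma card_bound {d m : ℕ} (hd : 0 < d) (hm : m ≤ 5 ^ d) {τ : ℝ} (hτ : τ ∈ Set.Ioo (0 : ℝ) 1) :
    (m : ℝ) * (2 * Real.exp (-(3 * ((d : ℝ) + Real.log (1 / τ))))) ≤ τ := by
  have h1 : Real.exp (-(3 * ((d : ℝ) + Real.log (1 / τ)))) ≤ Real.exp (-(3 * d : ℝ)) * τ := by
    nth_rewrite 2 [← Real.exp_log hτ.1]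
    rw [← Real.exp_add]
    apply Real.exp_le_exp.2
    rw [one_div, Real.log_inv]
    have := Real.log_neg hτ.1 hτ.2
    linarith
  have h2 : (m : ℝ) ≤ 5 ^ d := by exact_mod_cast hm
  have h3 : (5 : ℝ) ^ d * 2 ≤ Real.exp (3 * d) := by
    have : Real.exp (3 * d : ℝ) = Real.exp 3 ^ d := by rw [← Real.exp_nat_mul]; ring_nf
    rw [this]
    calc (5 : ℝ) ^ d * 2 ≤ 5 ^ d * 2 ^ d := by
          gcongr
          exact le_self_pow₀ (by norm_num) hd.ne'
      _ = 10 ^ d := by rw [← mul_pow]; norm_num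
      _ ≤ _ := pow_le_pow_left₀ (by norm_num) exp_three _
  have h4 : Real.exp (3 * d : ℝ) * Real.exp (-(3 * d : ℝ)) = 1 := by
    rw [← Real.exp_add]; simp
  have := hτ.1
  calc (m : ℝ) * (2 * Real.exp (-(3 * ((d : ℝ) + Real.log (1 / τ)))))
      ≤ 5 ^ d * (2 * (Real.exp (-(3 * d : ℝ)) * τ)) := by gcongr
    _ = (5 ^ d * 2) * (Real.exp (-(3 * d : ℝ)) * τ) := by ring
    _ ≤ Real.exp (3 * d) * (Real.exp (-(3 * d : ℝ)) * τ) := by gcongr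
    _ = τ := by rw [← mul_assoc, h4, one_mul]

/-- The estimator: abstract selection. -/
lemma exists_estimator (d n : ℕ) (N : Finset (EuclideanSpace ℝ (Fin d)))
    (κ : EuclideanSpace ℝ (Fin d) → ℝ) (t δ₀ : ℝ) (hδ : 0 < δ₀)
    (hN1 : ∀ u ∈ N, ‖u‖ = 1)
    (hN : ∀ x : EuclideanSpace ℝ (Fin d), ∀ c : ℝ, 0 ≤ c →
      (∀ u ∈ N, |inner ℝ x u| ≤ c) → ‖x‖ ≤ 2 * c) :
    ∃ A : (Fin n → Option (EuclideanSpace ℝ (Fin d))) → EuclideanSpace ℝ (Fin d),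
      Measurable A ∧ ∀ (μ : EuclideanSpace ℝ (Fin d)) v,
        (∀ u ∈ N, n * κ u < cnt (some '' hs u (t + inner ℝ μ u)) v ∧
          cnt (some '' hs u (t + δ₀ + inner ℝ μ u)) v < n * κ u) → ‖A v - μ‖ ≤ 4 * δ₀ := by
  classical
  let q : ℕ → EuclideanSpace ℝ (Fin d) := TopologicalSpace.denseSeq _
  let P : ℕ → (Fin n → Option (EuclideanSpace ℝ (Fin d))) → Prop := fun k v =>
    ∀ u ∈ N, n * κ u < cnt (some '' hs u (t + inner ℝ (q k) u - δ₀)) v ∧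
      cnt (some '' hs u (t + inner ℝ (q k) u + 2 * δ₀)) v < n * κ u
  have hPm : ∀ k, MeasurableSet {v | P k v} := by
    intro k
    have : {v | P k v} = ⋂ u ∈ N,
        ({v | n * κ u < cnt (some '' hs u (t + inner ℝ (q k) u - δ₀)) v} ∩
        {v | cnt (some '' hs u (t + inner ℝ (q k) u + 2 * δ₀)) v < n * κ u}) := by
      ext v; simp [P]
    rw [this]
    apply Finset.measurableSet_biInter
    intro u _
    exact (measurableSet_lt measurable_const (cnt_meas (some_hs_meas _ _))).inter
      (measurableSet_lt (cnt_meas (some_hs_meas _ _)) measurable_const)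
  let P' : ℕ → (Fin n → Option (EuclideanSpace ℝ (Fin d))) → Prop := fun k v =>
    P k v ∨ ∀ j, ¬ P j v
  have hP'm : ∀ k, MeasurableSet {v | P' k v} := by
    intro k
    have : {v | P' k v} = {v | P k v} ∪ ⋂ j, {v | P j v}ᶜ := by
      ext v; simp [P']
    rw [this]
    exact (hPm k).union (MeasurableSet.iInter fun j => (hPm j).compl)
  have hex : ∀ v, ∃ k, P' k v := by
    intro v
    by_cases h : ∃ k, P k v
    · obtain ⟨k, hk⟩ := h; exact ⟨k, Or.inl hk⟩
    · exact ⟨0, Or.inr (not_exists.1 h)⟩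
  refine ⟨fun v => q (Nat.find (hex v)), ?_, ?_⟩
  · exact (measurable_from_nat (f := q)).comp (measurable_find hex hP'm)
  · intro μ v hv
    have hqex : ∃ k, P k v := by
      obtain ⟨k, hk⟩ := (TopologicalSpace.denseRange_denseSeq
        (EuclideanSpace ℝ (Fin d))).exists_dist_lt μ hδ
      refine ⟨k, fun u hu => ?_⟩
      have h1 : |inner ℝ (μ - q k) u| ≤ δ₀ := by
        refine (abs_real_inner_le_norm _ _).trans ?_
        rw [hN1 u hu, mul_one, ← dist_eq_norm]
        exact hk.le
      rw [inner_sub_left, abs_le] at h1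
      constructor
      · refine (hv u hu).1.trans_le (cnt_mono (Set.image_mono (hs_anti u ?_)) v)
        linarith
      · refine (cnt_mono (Set.image_mono (hs_anti u ?_)) v).trans_lt (hv u hu).2
        linarith
    have hP : P (Nat.find (hex v)) v := by
      rcases Nat.find_spec (hex v) with h | h
      · exact h
      · exact absurd hqex (not_exists.2 h)
    have key := hN (q (Nat.find (hex v)) - μ) (2 * δ₀) (by linarith) ?_
    · linarith
    · intro u hu
      obtain ⟨h1, h2⟩ := hP u hu
      obtain ⟨h3, h4⟩ := hv u hu
      rw [inner_sub_left, abs_le]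
      constructor
      · by_contra! hc
        have := cnt_mono (Set.image_mono (f := some) (hs_anti u
          (show t + inner ℝ (q (Nat.find (hex v))) u + 2 * δ₀ ≤ t + inner ℝ μ u by linarith))) v
        linarith
      · by_contra! hc
        have := cnt_mono (Set.image_mono (f := some) (hs_anti u
          (show t + δ₀ + inner ℝ μ u ≤ t + inner ℝ (q (Nat.find (hex v))) u - δ₀ by linarith))) v
        linarith

end Final

/-- Sample complexity upper bound (multivariate): there is an absolute constant `C > 0`
such that for all `d ≥ 1`, `ε ∈ (0,1)`, `δ ∈ (0, √log(1 + ε/(1−ε)))`, `τ ∈ (0,1)` and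
`n ≥ exp(C·((1/δ)·log(1 + ε/(1−ε)))²)·(d + log(1/τ))/(ε²(1−ε))`, there exists an
estimator on `n` samples which, for every `μ ∈ ℝ^d` and every `ε`-corrupted version `Q`
of `N(μ, I_d)`, estimates `μ` to within `δ` in Euclidean norm with probability at least
`1 − τ` under `Q^⊗n`. -/
theorem stmt12 :
    ∃ C : ℝ, 0 < C ∧
      ∀ (d : ℕ) (ε δ τ : ℝ) (n : ℕ), 0 < d →
        ε ∈ Set.Ioo (0 : ℝ) 1 →
        δ ∈ Set.Ioo 0 (Real.sqrt (Real.log (1 + ε / (1 - ε)))) →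
        τ ∈ Set.Ioo (0 : ℝ) 1 → 0 < n →
        (n : ℝ) ≥ Real.exp (C * ((1 / δ) * Real.log (1 + ε / (1 - ε))) ^ 2) *
            ((d : ℝ) + Real.log (1 / τ)) / (ε ^ 2 * (1 - ε)) →
        ∃ A : (Fin n → Option (EuclideanSpace ℝ (Fin d))) → EuclideanSpace ℝ (Fin d),
          Measurable A ∧
          ∀ (μ : EuclideanSpace ℝ (Fin d)) (Q : Measure (Option (EuclideanSpace ℝ (Fin d)))),
            IsCorruptedVersion ε (mvGaussPDF d μ) Q →
            ((Measure.pi fun _ : Fin n => Q) {v | ‖A v - μ‖ ≤ δ}).toReal ≥ 1 - τ := by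
  refine ⟨64 + 40 * Real.exp 46, by positivity, ?_⟩
  intro d ε δ τ n hd hε hδ hτ hn hbig
  set L := Real.log (1 + ε / (1 - ε)) with hLdef
  have h1ε : 0 < 1 - ε := by linarith [hε.2]
  have hLeq : 1 + ε / (1 - ε) = (1 - ε)⁻¹ := by field_simp; ring
  have hexpL : Real.exp (-L) = 1 - ε := by
    rw [hLdef, hLeq, Real.log_inv, neg_neg, Real.exp_log h1ε]
  have hL : 0 < L := by
    apply Real.log_pos
    have : 0 < ε / (1 - ε) := div_pos hε.1 h1ε
    linarith
  have hδ0 : 0 < δ := hδ.1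
  have hδL : δ ^ 2 < L := (Real.lt_sqrt hδ0.le).1 hδ.2
  have hnum := numeric hL (ε := ε) (by linarith) hδ0 hδL
  set r := 1 / δ * L with hr
  have hr0 : 0 < r := by positivity
  have hLr : L = r * δ := by rw [hr]; field_simp
  set y := 1 - Real.exp (-(L + δ / 4)) with hy
  set D := (d : ℝ) + Real.log (1 / τ) with hD
  have hD0 : 0 ≤ D := by
    have : 0 ≤ Real.log (1 / τ) := Real.log_nonneg (by
      rw [le_div_iff₀ hτ.1]; linarith [hτ.2])
    positivity
  have hy0 : 0 < y := by
    have : Real.exp (-(L + δ / 4)) < 1 := Real.exp_lt_one_iff.2 (by linarith)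
    rw [hy]; linarith
  obtain ⟨N, hNc, hN1, hN⟩ := exists_net d
  let t : ℝ := 1 + 8 * r
  let a : EuclideanSpace ℝ (Fin d) → ℝ := fun u => (1 - ε) * psi u t
  let b : EuclideanSpace ℝ (Fin d) → ℝ := fun u => psi u (t + δ / 4)
  let κ : EuclideanSpace ℝ (Fin d) → ℝ := fun u => (a u + b u) / 2
  obtain ⟨A, hAm, hA⟩ := exists_estimator d n N κ t (δ / 4) (by linarith) hN1 hN
  refine ⟨A, hAm, ?_⟩
  intro μ Q hQ
  have : IsProbabilityMeasure Q := hQ.1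
  have hψ : ∀ u ∈ N, Real.exp (-36 - 64 * r ^ 2) ≤ psi u t := by
    intro u hu
    refine le_trans (Real.exp_le_exp.2 ?_) (psi_lower u (hN1 u hu) t (by positivity))
    simp only [t]
    nlinarith [sq_nonneg (6 - 8 * r)]
  have ha0 : ∀ u ∈ N, 0 < a u := fun u hu =>
    mul_pos h1ε ((Real.exp_pos _).trans_le (hψ u hu))
  have hb0 : ∀ u, 0 ≤ b u := fun u => psi_nonneg _ _
  have hgap : ∀ u ∈ N, a u * y ≤ a u - b u := by
    intro u hu
    have h := psi_ratio u (hN1 u hu) t (δ / 4) (by linarith)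
    have e : Real.exp (-(t * (δ / 4))) = (1 - ε) * Real.exp (-(L + δ / 4)) := by
      rw [← hexpL, ← Real.exp_add]
      congr 1
      simp only [t]
      rw [hLr]; ring
    rw [e] at h
    simp only [a, b, hy]
    linarith
  have hexpo : ∀ u ∈ N, 3 * D ≤ n * (((a u - b u) / 2) ^ 2 / (4 * a u)) := by
    intro u hu
    have hau := ha0 u hu
    have h1 : a u * y ^ 2 / 16 ≤ ((a u - b u) / 2) ^ 2 / (4 * a u) := by
      rw [le_div_iff₀ (by linarith)]
      have := pow_le_pow_left₀ (by positivity) (hgap u hu) 2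
      nlinarith
    have h2 : Real.exp ((64 + 40 * Real.exp 46) * r ^ 2) * D ≤ n * (ε ^ 2 * (1 - ε)) := by
      have hp : 0 < ε ^ 2 * (1 - ε) := mul_pos (pow_pos hε.1 2) h1ε
      exact (div_le_iff₀ hp).1 hbig
    have h3 : (1 - ε) * Real.exp (-36 - 64 * r ^ 2) ≤ a u :=
      mul_le_mul_of_nonneg_left (hψ u hu) h1ε.le
    have h4 : 48 * D * (ε ^ 2 * (1 - ε)) ≤ n * (a u * y ^ 2) * (ε ^ 2 * (1 - ε)) := by
      calc 48 * D * (ε ^ 2 * (1 - ε)) = (48 * ε ^ 2) * (D * (1 - ε)) := by ring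
        _ ≤ (Real.exp ((64 + 40 * Real.exp 46) * r ^ 2) *
            Real.exp (-36 - 64 * r ^ 2) * y ^ 2) * (D * (1 - ε)) :=
          mul_le_mul_of_nonneg_right hnum (by positivity)
        _ = (Real.exp ((64 + 40 * Real.exp 46) * r ^ 2) * D) *
            (((1 - ε) * Real.exp (-36 - 64 * r ^ 2)) * y ^ 2) := by ring
        _ ≤ (n * (ε ^ 2 * (1 - ε))) * (a u * y ^ 2) := by
          apply mul_le_mul h2 (mul_le_mul_of_nonneg_right h3 (sq_nonneg _)) (by positivity)
          have := hε.1
          positivity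
        _ = _ := by ring
    have h5 := le_of_mul_le_mul_right h4 (mul_pos (pow_pos hε.1 2) h1ε)
    have h6 := mul_le_mul_of_nonneg_left h1 (Nat.cast_nonneg (α := ℝ) n)
    linarith
  set M := (Measure.pi fun _ : Fin n => Q) with hM
  let B1 : EuclideanSpace ℝ (Fin d) → Set (Fin n → Option (EuclideanSpace ℝ (Fin d))) :=
    fun u => {v | cnt (some '' hs u (t + inner ℝ μ u)) v ≤ n * κ u}
  let B2 : EuclideanSpace ℝ (Fin d) → Set (Fin n → Option (EuclideanSpace ℝ (Fin d))) :=
    fun u => {v | n * κ u ≤ cnt (some '' hs u (t + δ / 4 + inner ℝ μ u)) v}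
  have hB : ∀ u ∈ N, M.real (B1 u ∪ B2 u) ≤ 2 * Real.exp (-(3 * D)) := by
    intro u hu
    have hau := ha0 u hu
    have hbu := hb0 u
    have hg := hgap u hu
    have hay : 0 < a u * y := mul_pos hau hy0
    have hbd1 := (corrupted_bounds hε hQ u t).1
    have hbd2 := (corrupted_bounds hε hQ u (t + δ / 4)).2
    have h1 := cnt_lower (n := n) Q (some_hs_meas u (t + inner ℝ μ u)) (a := a u) (κ := κ u) hau
      (by simp only [κ]; linarith) (by simp only [κ]; linarith) hbd1
    have h2 := cnt_upper (n := n) Q (some_hs_meas u (t + δ / 4 + inner ℝ μ u)) (a := a u)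
      (b := b u) (κ := κ u) hbu
      (by simp only [κ]; linarith) (by simp only [κ]; linarith) hau hbd2
    have e1 : a u - κ u = (a u - b u) / 2 := by simp only [κ]; ring
    have e2 : κ u - b u = (a u - b u) / 2 := by simp only [κ]; ring
    rw [e1] at h1
    rw [e2] at h2
    have h3 : Real.exp (-(n * (((a u - b u) / 2) ^ 2 / (4 * a u)))) ≤ Real.exp (-(3 * D)) :=
      Real.exp_le_exp.2 (by linarith [hexpo u hu])
    have h4 := measureReal_union_le (μ := M) (B1 u) (B2 u)
    have h5 : M.real (B1 u) ≤ Real.exp (-(3 * D)) := h1.trans h3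
    have h6 : M.real (B2 u) ≤ Real.exp (-(3 * D)) := h2.trans h3
    linarith
  have hbad : M.real (⋃ u ∈ N, (B1 u ∪ B2 u)) ≤ τ := by
    refine (measureReal_biUnion_finset_le N _).trans ?_
    refine (Finset.sum_le_sum hB).trans ?_
    rw [Finset.sum_const, nsmul_eq_mul]
    exact card_bound hd hNc hτ
  have hGm : MeasurableSet {v | ‖A v - μ‖ ≤ δ} :=
    measurableSet_le ((hAm.sub_const μ).norm) measurable_const
  have hsub : {v | ‖A v - μ‖ ≤ δ}ᶜ ⊆ ⋃ u ∈ N, (B1 u ∪ B2 u) := by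
    intro v hv
    by_contra hcon
    apply hv
    have := hA μ v (by
      intro u hu
      simp only [Set.mem_iUnion, not_exists] at hcon
      have h := hcon u hu
      constructor
      · by_contra! hc
        exact h (Or.inl hc)
      · by_contra! hc
        exact h (Or.inr hc))
    show ‖A v - μ‖ ≤ δ
    linarith
  have hcompl : M.real {v | ‖A v - μ‖ ≤ δ}ᶜ ≤ τ := (measureReal_mono hsub (measure_ne_top M _)).trans hbad
  have hsum := probReal_compl_eq_one_sub (μ := M) hGm
  show M.real {v | ‖A v - μ‖ ≤ δ} ≥ 1 - τ
  linarith
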